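/- There exist constants c1, c2, c3, c4 > 0 depending only on the dimension n, with c4 > 1, such that for every integrable f : Q0 = [0,1]^n → [0,∞) and every t ∈ (0, 1/c4], one has f^{**}(t) ≤ c1 · f_{Q0} · exp( c2 ∫_{c3 t^{1/n}}^1 v(f;σ) dσ/σ ). (For instance c1 = 2^n e^{2^n e + 1}, c2 = 2^{n−1} e n, c3 = 2 e^{1/n}, c4 = 2^n e^2 work.) -/

import Mathlib

open MeasureTheory Set Real

noncomputable section

/-- The unit cube `Q₀ = [0,1]ⁿ` in `ℝⁿ`. -/
def Q0 (n : ℕ) : Set (Fin n → ℝ) := Set.Icc 0 1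

/-- The integral average `f_Q = (1/|Q|) ∫_Q f` of `f` over `Q`. -/
def avgOn {n : ℕ} (f : (Fin n → ℝ) → ℝ) (Q : Set (Fin n → ℝ)) : ℝ :=
  (volume Q).toReal⁻¹ * ∫ x in Q, f x

/-- The mean oscillation `Ω(f,Q) = (1/|Q|) ∫_Q |f - f_Q|` of `f` over `Q`. -/
def oscOn {n : ℕ} (f : (Fin n → ℝ) → ℝ) (Q : Set (Fin n → ℝ)) : ℝ :=
  (volume Q).toReal⁻¹ * ∫ x in Q, |f x - avgOn f Q|

/-- `Q` is a dyadic subcube of `[0,1]ⁿ` of side length `2⁻ᵏ`,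
i.e. `Q = ∏ᵢ [mᵢ 2⁻ᵏ, (mᵢ+1) 2⁻ᵏ]` with `0 ≤ mᵢ < 2ᵏ`. -/
def IsDyadicSide (n k : ℕ) (Q : Set (Fin n → ℝ)) : Prop :=
  ∃ m : Fin n → ℕ, (∀ i, m i < 2 ^ k) ∧
    Q = Set.Icc (fun i => (m i : ℝ) / 2 ^ k) (fun i => ((m i : ℝ) + 1) / 2 ^ k)

/-- `Q` belongs to the family `𝒟` of dyadic subcubes of `[0,1]ⁿ`. -/
def IsDyadic (n : ℕ) (Q : Set (Fin n → ℝ)) : Prop := ∃ k, IsDyadicSide n k Q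

/-- One-dimensional integral average `g_J` over a set `J ⊆ ℝ`. -/
def avgI (g : ℝ → ℝ) (J : Set ℝ) : ℝ := (volume J).toReal⁻¹ * ∫ u in J, g u

/-- One-dimensional mean oscillation `Ω(g,J)` over a set `J ⊆ ℝ`. -/
def oscI (g : ℝ → ℝ) (J : Set ℝ) : ℝ :=
  (volume J).toReal⁻¹ * ∫ u in J, |g u - avgI g J|

/-- `g : (0,1] → ℝ` is the nonincreasing, left-continuous rearrangement of
`f : [0,1]ⁿ → ℝ`, i.e. it is nonincreasing, left continuous and equimeasurable with `f`. -/
def IsRearrangement {n : ℕ} (f : (Fin n → ℝ) → ℝ) (g : ℝ → ℝ) : Prop :=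
  AntitoneOn g (Set.Ioc 0 1) ∧
  (∀ t ∈ Set.Ioc (0:ℝ) 1, ContinuousWithinAt g (Set.Iio t) t) ∧
  ∀ lam : ℝ, volume {t ∈ Set.Ioc (0:ℝ) 1 | lam < g t} = volume {x ∈ Q0 n | lam < f x}

/-- The Hardy average `F(t) = (1/t) ∫_0^t g(u) du`. -/
def hardyAvg (g : ℝ → ℝ) (t : ℝ) : ℝ := t⁻¹ * ∫ u in Set.Ioc (0:ℝ) t, g u

/-- The Gurov–Reshetnyak modulus
`v(f;σ) = sup { Ω(f,Q)/f_Q : Q ∈ 𝒟, ℓ(Q) ≤ σ, f_Q > 0 }` (equal to `0` if no such `Q` exists,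
by the convention `sSup ∅ = 0` in `ℝ`). -/
def vGR {n : ℕ} (f : (Fin n → ℝ) → ℝ) (σ : ℝ) : ℝ :=
  sSup {r : ℝ | ∃ k Q, IsDyadicSide n k Q ∧ ((2:ℝ) ^ k)⁻¹ ≤ σ ∧
    0 < avgOn f Q ∧ r = oscOn f Q / avgOn f Q}

/-- `f` satisfies the dyadic Gurov–Reshetnyak condition `f ∈ GR_𝒟(Q₀,ε)`:
`f : Q₀ → [0,∞)` is integrable and `Ω(f,Q) ≤ ε f_Q` for every dyadic cube `Q`. -/
def GRcond {n : ℕ} (f : (Fin n → ℝ) → ℝ) (ε : ℝ) : Prop :=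
  IntegrableOn f (Q0 n) ∧ (∀ x ∈ Q0 n, 0 ≤ f x) ∧
    ∀ Q, IsDyadic n Q → oscOn f Q ≤ ε * avgOn f Q

/-!
Write `F = f**` and `α = f*(t)`. The set `{f > α}` has measure at most `t`, so a
Calderón–Zygmund stopping argument covers it, up to a null set, by disjoint dyadic cubes `Q` in
each of which it has density in `(2⁻ⁿ⁻¹, 1/2]`. Their total measure is at most `2ⁿ⁺¹ t`, and they
have side length less than `2⁻ᴺ` as soon as `2ⁿ⁺¹ t ≤ 2⁻ⁿᴺ`. Because `{f > α}` fills at most half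
of `Q`, the excess `∫_Q (f - α)⁺` is at most `∫_Q |f - f_Q| ≤ v(f; 2⁻ᴺ⁻¹) ∫_Q f`. Summing over
the cubes gives `F(t) - f*(t) ≤ 2ⁿ⁺¹ v(f; 2⁻ᴺ⁻¹) F(t)`.

Since `F(2⁻ⁿ t) ≤ f*(t) + 2ⁿ (F(t) - f*(t))`, shrinking `t` by the factor `2⁻ⁿ` multiplies `F` by at
most `1 + 2²ⁿ⁺¹ v ≤ exp (2²ⁿ⁺¹ v)`. Iterating down the grid `t = 2⁻ⁿᵏ` produces the exponential of
a dyadic sum of the nondecreasing function `v(f; ·)`, which is at most `∫ v(f; σ) dσ/σ / log 2`.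
-/

open Filter Topology ProbabilityTheory BoxIntegral
open scoped ENNReal

section LevelSets

variable {X Y : Type*} [MeasurableSpace X] [MeasurableSpace Y] {μ : Measure X} {ν : Measure Y}

lemma identDistrib_of_measure_lt_eq [IsFiniteMeasure μ] {f : X → ℝ} {g : Y → ℝ}
    (hf : AEMeasurable f μ) (hg : AEMeasurable g ν)
    (h : ∀ a, μ {x | a < f x} = ν {y | a < g y}) : IdentDistrib f g μ ν := by
  have map_Ioi : ∀ a, μ.map f (Ioi a) = ν.map g (Ioi a) := fun a ↦ by
    rw [Measure.map_apply_of_aemeasurable hf measurableSet_Ioi,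
      Measure.map_apply_of_aemeasurable hg measurableSet_Ioi]
    exact h a
  refine ⟨hf, hg, Measure.ext_of_Ioc _ _ fun a b hab ↦ ?_⟩
  have hb : μ.map f (Ioi b) ≠ ∞ := measure_ne_top _ _
  have hsub : Ioi b ⊆ Ioi a := Ioi_subset_Ioi hab.le
  rw [← Ioi_sdiff_Ioi, measure_sdiff hsub nullMeasurableSet_Ioi hb,
    measure_sdiff hsub nullMeasurableSet_Ioi (map_Ioi b ▸ hb), map_Ioi, map_Ioi]

lemma measure_le_measure_compl_of_two_mul_le [IsFiniteMeasure μ] {E : Set X}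
    (hE : NullMeasurableSet E μ) (h : 2 * μ E ≤ μ univ) : μ E ≤ μ Eᶜ := by
  rwa [two_mul, ← measure_add_measure_compl₀ hE, ENNReal.add_le_add_iff_left (measure_ne_top μ E)]
    at h

-- Where `f ≤ α` one has `a - α ≤ |f - a|`, and this set is at least as large as `{α < f}`.
lemma lintegral_ofReal_sub_le_lintegral_abs_sub [IsFiniteMeasure μ] {f : X → ℝ}
    (hf : AEMeasurable f μ) {α : ℝ} (hα : 2 * μ {x | α < f x} ≤ μ univ) (a : ℝ) :
    ∫⁻ x, ENNReal.ofReal (f x - α) ∂μ ≤ ∫⁻ x, ENNReal.ofReal |f x - a| ∂μ := by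
  set E := {x | α < f x} with hE
  have hEm : NullMeasurableSet E μ := nullMeasurableSet_lt aemeasurable_const hf
  have split (u : X → ℝ≥0∞) : ∫⁻ x in E, u x ∂μ + ∫⁻ x in Eᶜ, u x ∂μ = ∫⁻ x, u x ∂μ := by
    simpa [← compl_eq_univ_sdiff, lintegral_add_measure] using
      congr_arg (fun κ : Measure X ↦ ∫⁻ x, u x ∂κ) (Measure.restrict_inter_add_sdiff₀ univ hEm)
  have zero_off : ∫⁻ x in Eᶜ, ENNReal.ofReal (f x - α) ∂μ = 0 := by
    refine lintegral_eq_zero_of_ae_eq_zero ((ae_restrict_iff'₀ hEm.compl).2 (.of_forall ?_))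
    intro x hx
    exact ENNReal.ofReal_of_nonpos (sub_nonpos.2 (by simpa [hE] using hx))
  calc ∫⁻ x, ENNReal.ofReal (f x - α) ∂μ
      = ∫⁻ x in E, ENNReal.ofReal (f x - α) ∂μ := by rw [← split, zero_off, add_zero]
    _ ≤ ∫⁻ x in E, (ENNReal.ofReal |f x - a| + ENNReal.ofReal (a - α)) ∂μ := by
      refine lintegral_mono fun x ↦ le_trans (ENNReal.ofReal_le_ofReal ?_) ENNReal.ofReal_add_le
      linarith [le_abs_self (f x - a)]
    _ = ∫⁻ x in E, ENNReal.ofReal |f x - a| ∂μ + ENNReal.ofReal (a - α) * μ E := by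
      rw [lintegral_add_right _ measurable_const, setLIntegral_const]
    _ ≤ ∫⁻ x in E, ENNReal.ofReal |f x - a| ∂μ + ENNReal.ofReal (a - α) * μ Eᶜ := by
      gcongr 1
      exact mul_le_mul_right (measure_le_measure_compl_of_two_mul_le hEm hα) _
    _ ≤ ∫⁻ x in E, ENNReal.ofReal |f x - a| ∂μ + ∫⁻ x in Eᶜ, ENNReal.ofReal |f x - a| ∂μ := by
      rw [← setLIntegral_const]
      refine add_le_add_right ?_ _
      refine lintegral_mono_ae ((ae_restrict_iff'₀ hEm.compl).2 (.of_forall fun x hx ↦ ?_))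
      have hx : f x ≤ α := by simpa [hE] using hx
      exact ENNReal.ofReal_le_ofReal (by linarith [neg_abs_le (f x - a)])
    _ = ∫⁻ x, ENNReal.ofReal |f x - a| ∂μ := split _

end LevelSets

section DyadicBoxes

open unitPartition

variable {ι : Type*}

lemma index_eq_of_index_mul_eq {m d : ℕ} (hd : d ≠ 0) {x y : ι → ℝ}
    (h : index (m * d) x = index (m * d) y) : index m x = index m y := by
  have hd' : (d : ℝ) ≠ 0 := Nat.cast_ne_zero.2 hd
  have index_eq (z : ι → ℝ) (i : ι) :
      index m z i = -(-(index (m * d) z i + 1) / (d : ℤ)) - 1 := by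
    have hz : -((m * d : ℕ) * z i) / d = -(m * z i) := by push_cast; field_simp
    rw [index_apply, index_apply, sub_add_cancel, ← Int.floor_neg, ← Int.floor_div_natCast, hz,
      Int.floor_neg, neg_neg]
  funext i
  rw [index_eq, index_eq, h]

/-- The half-open dyadic box `∏ᵢ (νᵢ 2⁻ᵏ, (νᵢ + 1) 2⁻ᵏ]`. The boxes of a given level `k` partition
the space; the closed dyadic cubes are their closures. -/
def dyadicBox (k : ℕ) (ν : ι → ℤ) : Set (ι → ℝ) := box (2 ^ k) ν

lemma mem_dyadicBox_iff {k : ℕ} {ν : ι → ℤ} {x : ι → ℝ} :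
    x ∈ dyadicBox k ν ↔ index (2 ^ k) x = ν :=
  mem_box_iff_index

lemma dyadicBox_subset_of_mem {j k : ℕ} (hjk : j ≤ k) {μ ν : ι → ℤ} {x : ι → ℝ}
    (hμ : x ∈ dyadicBox j μ) (hν : x ∈ dyadicBox k ν) :
    dyadicBox k ν ⊆ dyadicBox j μ := by
  intro y hy
  rw [mem_dyadicBox_iff] at hμ hν hy ⊢
  rw [← hμ]
  refine index_eq_of_index_mul_eq (d := 2 ^ (k - j)) (by positivity) ?_
  rw [← pow_add, Nat.add_sub_cancel' hjk, hy, hν]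

lemma measurableSet_dyadicBox [Countable ι] (k : ℕ) (ν : ι → ℤ) : MeasurableSet (dyadicBox k ν) :=
  Box.measurableSet_coe _

variable [Fintype ι]

lemma dyadicBox_ae_eq_Icc (k : ℕ) (ν : ι → ℤ) : dyadicBox k ν =ᵐ[volume] Box.Icc (box (2 ^ k) ν) :=
  Box.coe_ae_eq_Icc _

lemma volume_dyadicBox (k : ℕ) (ν : ι → ℤ) :
    volume (dyadicBox k ν) = ((2 ^ k) ^ Fintype.card ι)⁻¹ := by
  simp [dyadicBox]

lemma volume_dyadicBox_eq_pow_mul_succ (k : ℕ) (μ ν : ι → ℤ) :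
    volume (dyadicBox k μ) =
      2 ^ Fintype.card ι * volume (dyadicBox (k + 1) ν) := by
  rw [volume_dyadicBox, volume_dyadicBox, pow_succ, mul_pow,
    ENNReal.mul_inv (.inr (by finiteness)) (.inr (by positivity)), mul_left_comm,
    ENNReal.mul_inv_cancel (by positivity) (by finiteness), mul_one]

lemma Icc_box_two_pow_eq_closedBall (k : ℕ) (ν : ι → ℤ) :
    Box.Icc (box (2 ^ k) ν) =
      Metric.closedBall (fun i ↦ ((ν i : ℝ) + 2⁻¹) / 2 ^ k) (2 ^ (k + 1))⁻¹ := by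
  rw [closedBall_pi _ (by positivity), Box.Icc_eq_pi]
  refine pi_congr rfl fun i _ ↦ ?_
  rw [Real.closedBall_eq_Icc, box_lower, box_upper, pow_succ]
  push_cast
  congr 1 <;> field_simp <;> ring

lemma ae_tendsto_volume_inter_dyadicBox_div (E : Set (ι → ℝ)) :
    ∀ᵐ x ∂volume.restrict E, Tendsto
      (fun k : ℕ ↦ volume (E ∩ dyadicBox k (index (2 ^ k) x)) /
        volume (dyadicBox k (index (2 ^ k) x))) atTop (𝓝 1) := by
  filter_upwards [IsUnifLocDoublingMeasure.ae_tendsto_measure_inter_div volume E 1] with x hx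
  have radius_tendsto : Tendsto (fun k : ℕ ↦ ((2 : ℝ) ^ (k + 1))⁻¹) atTop (𝓝[>] 0) := by
    refine tendsto_nhdsWithin_iff.2 ⟨?_, .of_forall fun k ↦ mem_Ioi.2 (by positivity)⟩
    exact tendsto_inv_atTop_zero.comp
      ((tendsto_pow_atTop_atTop_of_one_lt one_lt_two).comp (tendsto_add_atTop_nat 1))
  refine (hx (fun k i ↦ ((index (2 ^ k) x i : ℝ) + 2⁻¹) / 2 ^ k) _ radius_tendsto
    (.of_forall fun k ↦ ?_)).congr fun k ↦ ?_
  · rw [one_mul, ← Icc_box_two_pow_eq_closedBall]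
    exact Box.coe_subset_Icc (mem_dyadicBox_iff.2 rfl)
  · have hae := dyadicBox_ae_eq_Icc k (index (2 ^ k) x)
    rw [← Icc_box_two_pow_eq_closedBall, measure_congr hae,
      measure_congr ((EventuallyEq.refl _ E).inter hae)]

/-- `E` occupies more than the proportion `c⁻¹` of the dyadic box of level `k` and index `ν`. -/
def IsHeavyBox (E : Set (ι → ℝ)) (c : ℝ≥0∞) (k : ℕ) (ν : ι → ℤ) : Prop :=
  volume (dyadicBox k ν) < c * volume (E ∩ dyadicBox k ν)

/-- The Calderón–Zygmund stopping family of `E`: the pairs (level, index) of the maximal heavy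
dyadic boxes among those of level at least `N`. -/
def stoppingBoxes (E : Set (ι → ℝ)) (c : ℝ≥0∞) (N : ℕ) : Set (ℕ × (ι → ℤ)) :=
  {p | N ≤ p.1 ∧ IsHeavyBox E c p.1 p.2 ∧ ∀ j < p.1, N ≤ j → ∀ ν,
    dyadicBox p.1 p.2 ⊆ dyadicBox j ν → ¬ IsHeavyBox E c j ν}

/-- The union of the stopping family of `E`. -/
def stoppingSet (E : Set (ι → ℝ)) (c : ℝ≥0∞) (N : ℕ) : Set (ι → ℝ) :=
  ⋃ p ∈ stoppingBoxes E c N, dyadicBox p.1 p.2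

lemma pairwiseDisjoint_stoppingBoxes (E : Set (ι → ℝ)) (c : ℝ≥0∞) (N : ℕ) :
    (stoppingBoxes E c N).PairwiseDisjoint fun p ↦ dyadicBox p.1 p.2 := by
  have level_le {p q : ℕ × (ι → ℤ)} (hp : p ∈ stoppingBoxes E c N) (hq : q ∈ stoppingBoxes E c N)
      {x : ι → ℝ} (hxp : x ∈ dyadicBox p.1 p.2) (hxq : x ∈ dyadicBox q.1 q.2) : q.1 ≤ p.1 := by
    by_contra! hlt
    exact hq.2.2 _ hlt hp.1 _ (dyadicBox_subset_of_mem hlt.le hxp hxq) hp.2.1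
  refine fun p hp q hq hpq ↦ disjoint_left.2 fun x hxp hxq ↦ hpq ?_
  have level_eq := le_antisymm (level_le hq hp hxq hxp) (level_le hp hq hxp hxq)
  refine Prod.ext level_eq ?_
  rw [← mem_dyadicBox_iff.1 hxp, ← mem_dyadicBox_iff.1 hxq, level_eq]

lemma measurableSet_stoppingSet (E : Set (ι → ℝ)) (c : ℝ≥0∞) (N : ℕ) :
    MeasurableSet (stoppingSet E c N) :=
  .biUnion (to_countable _) fun _ _ ↦ measurableSet_dyadicBox _ _

lemma measure_stoppingSet_mono {E : Set (ι → ℝ)} {c : ℝ≥0∞} {N : ℕ} {μ₁ μ₂ : Measure (ι → ℝ)}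
    (h : ∀ p ∈ stoppingBoxes E c N, μ₁ (dyadicBox p.1 p.2) ≤ μ₂ (dyadicBox p.1 p.2)) :
    μ₁ (stoppingSet E c N) ≤ μ₂ (stoppingSet E c N) := by
  have disj := pairwiseDisjoint_stoppingBoxes E c N
  have meas : ∀ p ∈ stoppingBoxes E c N, MeasurableSet (dyadicBox p.1 p.2) :=
    fun _ _ ↦ measurableSet_dyadicBox _ _
  rw [stoppingSet, measure_biUnion (to_countable _) disj meas,
    measure_biUnion (to_countable _) disj meas]
  exact ENNReal.tsum_le_tsum fun p ↦ h p p.2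

lemma ae_mem_stoppingSet (E : Set (ι → ℝ)) {c : ℝ≥0∞} (hc : 1 < c) (N : ℕ) :
    ∀ᵐ x ∂volume.restrict E, x ∈ stoppingSet E c N := by
  filter_upwards [ae_tendsto_volume_inter_dyadicBox_div E] with x hx
  have eventually_heavy : ∀ᶠ k : ℕ in atTop, IsHeavyBox E c k (index (2 ^ k) x) := by
    filter_upwards [hx.eventually (lt_mem_nhds (ENNReal.inv_lt_one.2 hc))] with k hk
    have hc0 : c ≠ 0 := (zero_lt_one.trans hc).ne'
    refine lt_of_not_ge fun hle ↦ (ENNReal.mul_lt_of_lt_div hk).not_ge ?_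
    rwa [mul_comm, ← div_eq_mul_inv, ENNReal.le_div_iff_mul_le (.inl hc0)
      (.inr (by simp [volume_dyadicBox])), mul_comm]
  classical
  have exists_heavy := ((eventually_ge_atTop N).and eventually_heavy).exists
  obtain ⟨hN, hheavy⟩ := Nat.find_spec exists_heavy
  refine mem_iUnion₂.2 ⟨(Nat.find exists_heavy, _), ⟨hN, hheavy, fun j hj hNj ν hsub hjν ↦ ?_⟩,
    mem_dyadicBox_iff.2 rfl⟩
  have hν : index (2 ^ j) x = ν := mem_dyadicBox_iff.1 (hsub (mem_dyadicBox_iff.2 rfl))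
  exact Nat.find_min exists_heavy hj ⟨hNj, hν ▸ hjν⟩

lemma volume_stoppingSet_le (E : Set (ι → ℝ)) (c : ℝ≥0∞) (N : ℕ) :
    volume (stoppingSet E c N) ≤ c * volume E := by
  calc
    _ ≤ (c • volume.restrict E) (stoppingSet E c N) := by
      refine measure_stoppingSet_mono fun p hp ↦ ?_
      rw [Measure.smul_apply, smul_eq_mul, Measure.restrict_apply (measurableSet_dyadicBox _ _),
        inter_comm]
      exact hp.2.1.le
    _ ≤ c * volume E := by
      rw [Measure.smul_apply, smul_eq_mul, ← Measure.restrict_apply_univ E]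
      exact mul_le_mul_right (measure_mono (subset_univ _)) c

lemma level_lt_of_mem_stoppingBoxes {E : Set (ι → ℝ)} {c : ℝ≥0∞} {N : ℕ}
    (hE : c * volume E ≤ ((2 ^ N) ^ Fintype.card ι)⁻¹) {p : ℕ × (ι → ℤ)}
    (hp : p ∈ stoppingBoxes E c N) : N < p.1 := by
  refine hp.1.lt_of_ne fun hNp ↦ hp.2.1.not_ge ?_
  rw [volume_dyadicBox, ← hNp]
  exact (mul_le_mul_right (measure_mono inter_subset_left) _).trans hE

lemma dyadicBox_subset_of_mem_stoppingBoxes {E : Set (ι → ℝ)} {c : ℝ≥0∞} {j N : ℕ} {μ : ι → ℤ}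
    (hE : E ⊆ dyadicBox j μ) {p : ℕ × (ι → ℤ)} (hp : p ∈ stoppingBoxes E c N) (hj : j ≤ p.1) :
    dyadicBox p.1 p.2 ⊆ dyadicBox j μ := by
  have hpos : volume (E ∩ dyadicBox p.1 p.2) ≠ 0 :=
    fun hzero ↦ not_lt_zero (hp.2.1.trans_eq (by rw [hzero, mul_zero]))
  obtain ⟨x, hxE, hxp⟩ := nonempty_of_measure_ne_zero hpos
  exact dyadicBox_subset_of_mem hj (hE hxE) hxp

lemma mul_volume_inter_le_of_mem_stoppingBoxes {E : Set (ι → ℝ)} {c : ℝ≥0∞} {N : ℕ}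
    {p : ℕ × (ι → ℤ)} (hp : p ∈ stoppingBoxes E c N) (hN : N < p.1) :
    c * volume (E ∩ dyadicBox p.1 p.2) ≤ 2 ^ Fintype.card ι * volume (dyadicBox p.1 p.2) := by
  obtain ⟨k, ν⟩ := p
  obtain ⟨k, rfl⟩ : ∃ j, k = j + 1 := ⟨k - 1, (Nat.sub_add_cancel (by lia)).symm⟩
  set parent : ι → ℤ := index (2 ^ k) (tag (2 ^ (k + 1)) ν)
  have subset_parent : dyadicBox (k + 1) ν ⊆ dyadicBox k parent :=
    dyadicBox_subset_of_mem k.le_succ (mem_dyadicBox_iff.2 rfl) (tag_mem _ ν)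
  rw [← volume_dyadicBox_eq_pow_mul_succ k parent]
  exact (mul_le_mul_right (measure_mono (inter_subset_inter_right E subset_parent)) c).trans
    (not_lt.1 (hp.2.2 k k.lt_succ_self (Nat.le_of_lt_succ hN) parent subset_parent))

end DyadicBoxes

section Oscillation

open unitPartition

variable {n k : ℕ} {f : (Fin n → ℝ) → ℝ} {Q : Set (Fin n → ℝ)} {σ : ℝ}

lemma measurableSet_Q0 (n : ℕ) : MeasurableSet (Q0 n) := measurableSet_Icc

lemma volume_Q0 (n : ℕ) : volume (Q0 n) = 1 := by simp [Q0, Real.volume_Icc_pi]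

lemma avgOn_nonneg (hQ : MeasurableSet Q) (h0 : ∀ x ∈ Q, 0 ≤ f x) : 0 ≤ avgOn f Q :=
  mul_nonneg (by positivity) (setIntegral_nonneg hQ h0)

lemma oscOn_nonneg : 0 ≤ oscOn f Q :=
  mul_nonneg (by positivity) (integral_nonneg fun _ ↦ abs_nonneg _)

lemma oscOn_le_two_mul_avgOn (hQ : MeasurableSet Q) (hQ' : volume Q ≠ ∞) (hf : IntegrableOn f Q)
    (h0 : ∀ x ∈ Q, 0 ≤ f x) : oscOn f Q ≤ 2 * avgOn f Q := by
  have havg := avgOn_nonneg hQ h0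
  have hconst : IntegrableOn (fun _ ↦ avgOn f Q) Q := integrableOn_const hQ'
  calc oscOn f Q
      ≤ (volume Q).toReal⁻¹ * ∫ x in Q, (f x + avgOn f Q) := by
        refine mul_le_mul_of_nonneg_left ?_ (by positivity)
        refine setIntegral_mono_on (hf.sub hconst).abs (hf.add hconst) hQ fun x hx ↦ ?_
        exact abs_le.2 ⟨by linarith [h0 x hx], by linarith⟩
    _ = avgOn f Q + (volume Q).toReal⁻¹ * (volume Q).toReal * avgOn f Q := by
        rw [integral_add hf hconst, setIntegral_const, mul_add, smul_eq_mul, mul_assoc]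
        rfl
    _ ≤ avgOn f Q + 1 * avgOn f Q := by gcongr; exact inv_mul_le_one
    _ = 2 * avgOn f Q := by ring

namespace IsDyadicSide

lemma measurableSet (hQ : IsDyadicSide n k Q) : MeasurableSet Q := by
  obtain ⟨m, -, rfl⟩ := hQ
  exact measurableSet_Icc

lemma volume_eq (hQ : IsDyadicSide n k Q) : volume Q = ENNReal.ofReal ((2 ^ k)⁻¹) ^ n := by
  obtain ⟨m, -, rfl⟩ := hQ
  simp [Real.volume_Icc_pi, add_div]

lemma subset_Q0 (hQ : IsDyadicSide n k Q) : Q ⊆ Q0 n := by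
  obtain ⟨m, hm, rfl⟩ := hQ
  refine Icc_subset_Icc (fun i ↦ by positivity) fun i ↦ ?_
  rw [div_le_iff₀ (by positivity), Pi.one_apply, one_mul]
  exact_mod_cast hm i

end IsDyadicSide

lemma dyadicBox_zero_ae_eq_Q0 (n : ℕ) : dyadicBox 0 (0 : Fin n → ℤ) =ᵐ[volume] Q0 n := by
  refine (dyadicBox_ae_eq_Icc 0 0).trans (.of_eq ?_)
  exact congr_arg₂ Icc (funext fun i ↦ by simp) (funext fun i ↦ by simp)

lemma isDyadicSide_Icc_box {ν : Fin n → ℤ}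
    (hν : dyadicBox k ν ⊆ dyadicBox 0 0) :
    IsDyadicSide n k (Box.Icc (box (2 ^ k) ν)) := by
  have index_range (i : Fin n) : 0 ≤ ν i ∧ ν i < 2 ^ k := by
    have htag := mem_box_iff'.1 (hν (tag_mem (2 ^ k) ν)) i
    simp only [tag_apply, Pi.zero_apply, Int.cast_zero, pow_zero, Nat.cast_one,
      one_mul, zero_add, Nat.cast_pow, Nat.cast_ofNat] at htag
    rw [div_pos_iff_of_pos_right (by positivity), div_le_one (by positivity)] at htag
    exact ⟨Int.lt_add_one_iff.1 (by exact_mod_cast htag.1), Int.add_one_le_iff.1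
      (by exact_mod_cast htag.2)⟩
  refine ⟨fun i ↦ (ν i).toNat, fun i ↦ ?_, ?_⟩
  · exact (Int.toNat_lt (index_range i).1).2 (by exact_mod_cast (index_range i).2)
  · have cast_toNat (i : Fin n) : (((ν i).toNat : ℕ) : ℝ) = ν i := by
      exact_mod_cast Int.toNat_of_nonneg (index_range i).1
    simp [cast_toNat, Box.Icc_def]

/-- The ratios `Ω(f,Q)/f_Q` over the dyadic cubes `Q` with `ℓ(Q) ≤ σ` and `f_Q > 0`, whose supremum
is `vGR f σ`. -/
def oscRatios (f : (Fin n → ℝ) → ℝ) (σ : ℝ) : Set ℝ :=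
  {r : ℝ | ∃ k Q, IsDyadicSide n k Q ∧ ((2 : ℝ) ^ k)⁻¹ ≤ σ ∧
    0 < avgOn f Q ∧ r = oscOn f Q / avgOn f Q}

lemma vGR_nonneg (f : (Fin n → ℝ) → ℝ) (σ : ℝ) : 0 ≤ vGR f σ := by
  refine Real.sSup_nonneg ?_
  rintro _ ⟨k, Q, -, -, hpos, rfl⟩
  exact div_nonneg oscOn_nonneg hpos.le

variable (hf : IntegrableOn f (Q0 n)) (h0 : ∀ x ∈ Q0 n, 0 ≤ f x)
include hf h0

lemma IsDyadicSide.oscOn_le_two_mul_avgOn (hQ : IsDyadicSide n k Q) :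
    oscOn f Q ≤ 2 * avgOn f Q :=
  _root_.oscOn_le_two_mul_avgOn hQ.measurableSet (by rw [hQ.volume_eq]; finiteness)
    (hf.mono_set hQ.subset_Q0) fun x hx ↦ h0 x (hQ.subset_Q0 hx)

lemma bddAbove_oscRatios (σ : ℝ) : BddAbove (oscRatios f σ) := by
  refine ⟨2, ?_⟩
  rintro _ ⟨k, Q, hQ, -, hpos, rfl⟩
  exact (div_le_iff₀ hpos).2 (hQ.oscOn_le_two_mul_avgOn hf h0)

lemma monotone_vGR : Monotone (vGR f) := by
  refine fun σ τ hστ ↦ Real.sSup_le ?_ (vGR_nonneg f τ)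
  rintro r ⟨k, Q, hQ, hk, hr⟩
  exact le_csSup (bddAbove_oscRatios hf h0 τ) ⟨k, Q, hQ, hk.trans hστ, hr⟩

lemma IsDyadicSide.oscOn_le_vGR_mul_avgOn (hQ : IsDyadicSide n k Q) (hk : ((2 : ℝ) ^ k)⁻¹ ≤ σ) :
    oscOn f Q ≤ vGR f σ * avgOn f Q := by
  have havg : 0 ≤ avgOn f Q := avgOn_nonneg hQ.measurableSet fun x hx ↦ h0 x (hQ.subset_Q0 hx)
  rcases havg.eq_or_lt with hzero | hpos
  · simpa [← hzero] using hQ.oscOn_le_two_mul_avgOn hf h0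
  · rw [← div_le_iff₀ hpos]
    exact le_csSup (bddAbove_oscRatios hf h0 σ) ⟨k, Q, hQ, hk, hpos, rfl⟩

lemma IsDyadicSide.lintegral_abs_sub_avgOn_le (hQ : IsDyadicSide n k Q)
    (hk : ((2 : ℝ) ^ k)⁻¹ ≤ σ) :
    ∫⁻ x in Q, ENNReal.ofReal |f x - avgOn f Q| ≤
      ENNReal.ofReal (vGR f σ) * ∫⁻ x in Q, ENNReal.ofReal (f x) := by
  have hvol : 0 < (volume Q).toReal := by
    rw [hQ.volume_eq]
    exact ENNReal.toReal_pos (by positivity) (by finiteness)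
  have hfQ : IntegrableOn f Q := hf.mono_set hQ.subset_Q0
  have hdiff : IntegrableOn (fun x ↦ f x - avgOn f Q) Q :=
    hfQ.sub (integrableOn_const (by rw [hQ.volume_eq]; finiteness))
  have real_bound : ∫ x in Q, |f x - avgOn f Q| ≤ vGR f σ * ∫ x in Q, f x := by
    refine le_of_mul_le_mul_left ?_ (inv_pos.2 hvol)
    rw [mul_left_comm]
    exact hQ.oscOn_le_vGR_mul_avgOn hf h0 hk
  rw [← ofReal_integral_eq_lintegral_ofReal hdiff.abs (.of_forall fun x ↦ abs_nonneg _),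
    ← ofReal_integral_eq_lintegral_ofReal hfQ
      (ae_restrict_of_forall_mem hQ.measurableSet fun x hx ↦ h0 x (hQ.subset_Q0 hx)),
    ← ENNReal.ofReal_mul (vGR_nonneg f σ)]
  exact ENNReal.ofReal_le_ofReal real_bound

end Oscillation

section LevelSetEstimate

open unitPartition

lemma lintegral_ofReal_sub_le_lintegral_stoppingSet {ι : Type*} [Fintype ι] (f : (ι → ℝ) → ℝ)
    (α : ℝ) {D : Set (ι → ℝ)} (hD : MeasurableSet D) {c : ℝ≥0∞} (hc : 1 < c) (N : ℕ) :
    ∫⁻ x in D, ENNReal.ofReal (f x - α) ≤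
      ∫⁻ x in stoppingSet ({x | α < f x} ∩ D) c N, ENNReal.ofReal (f x - α) := by
  rw [← lintegral_indicator hD, ← lintegral_indicator (measurableSet_stoppingSet _ _ _)]
  refine lintegral_mono_ae ?_
  filter_upwards [ae_imp_of_ae_restrict (ae_mem_stoppingSet ({x | α < f x} ∩ D) hc N)] with x hx
  refine indicator_apply_le fun hxD ↦ ?_
  rcases le_or_gt (f x) α with hle | hlt
  · simp [ENNReal.ofReal_of_nonpos (sub_nonpos.2 hle)]
  · rw [indicator_of_mem (hx ⟨hlt, hxD⟩)]

variable {n N : ℕ} {f : (Fin n → ℝ) → ℝ} {α : ℝ}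
  (hf : IntegrableOn f (Q0 n)) (h0 : ∀ x ∈ Q0 n, 0 ≤ f x)
include hf h0

lemma lintegral_dyadicBox_ofReal_sub_le {k : ℕ} {ν : Fin n → ℤ} {σ : ℝ}
    (hQ : IsDyadicSide n k (Box.Icc (box (2 ^ k) ν))) (hk : ((2 : ℝ) ^ k)⁻¹ ≤ σ)
    (hα : 2 * volume ({x | α < f x} ∩ dyadicBox k ν) ≤ volume (dyadicBox k ν)) :
    ∫⁻ x in dyadicBox k ν, ENNReal.ofReal (f x - α) ≤
      ENNReal.ofReal (vGR f σ) * ∫⁻ x in dyadicBox k ν, ENNReal.ofReal (f x) := by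
  rw [Measure.restrict_congr_set (dyadicBox_ae_eq_Icc k ν)]
  refine le_trans ?_ (hQ.lintegral_abs_sub_avgOn_le hf h0 hk)
  have : IsFiniteMeasure (volume.restrict (Box.Icc (box (2 ^ k) ν))) :=
    isFiniteMeasure_restrict.2 (Box.measure_Icc_lt_top _ _).ne
  refine lintegral_ofReal_sub_le_lintegral_abs_sub
    (hf.mono_set hQ.subset_Q0).aestronglyMeasurable.aemeasurable ?_ _
  rwa [← Measure.restrict_congr_set (dyadicBox_ae_eq_Icc k ν), Measure.restrict_apply_univ,
    Measure.restrict_apply' (measurableSet_dyadicBox _ _)]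

lemma lintegral_stoppingSet_ofReal_sub_le
    (hα : 2 ^ (n + 1) * volume ({x | α < f x} ∩ dyadicBox 0 0) ≤ ((2 ^ N) ^ n)⁻¹) :
    ∫⁻ x in stoppingSet ({x | α < f x} ∩ dyadicBox 0 0) (2 ^ (n + 1)) N,
        ENNReal.ofReal (f x - α) ≤
      ENNReal.ofReal (vGR f (2 ^ (N + 1))⁻¹) *
        ∫⁻ x in stoppingSet ({x | α < f x} ∩ dyadicBox 0 0) (2 ^ (n + 1)) N,
          ENNReal.ofReal (f x) := by
  rw [← withDensity_apply _ (measurableSet_stoppingSet _ _ _),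
    ← withDensity_apply _ (measurableSet_stoppingSet _ _ _), ← smul_eq_mul, ← Measure.smul_apply]
  refine measure_stoppingSet_mono fun p hp ↦ ?_
  rw [Measure.smul_apply, smul_eq_mul, withDensity_apply _ (measurableSet_dyadicBox _ _),
    withDensity_apply _ (measurableSet_dyadicBox _ _)]
  have hN : N < p.1 := level_lt_of_mem_stoppingBoxes (by rwa [Fintype.card_fin]) hp
  have hsub := dyadicBox_subset_of_mem_stoppingBoxes inter_subset_right hp p.1.zero_le
  refine lintegral_dyadicBox_ofReal_sub_le hf h0 (isDyadicSide_Icc_box hsub)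
    (inv_anti₀ (by positivity) (pow_le_pow_right₀ one_le_two hN)) ?_
  have hle := mul_volume_inter_le_of_mem_stoppingBoxes hp hN
  rwa [inter_assoc, inter_eq_self_of_subset_right hsub, Fintype.card_fin, pow_succ, mul_assoc,
    ENNReal.mul_le_mul_iff_right (by positivity) (by finiteness)] at hle

lemma lintegral_unitBox_ofReal_sub_le
    (hα : 2 ^ (n + 1) * volume ({x | α < f x} ∩ dyadicBox 0 0) ≤ ((2 ^ N) ^ n)⁻¹) :
    ∫⁻ x in dyadicBox 0 0, ENNReal.ofReal (f x - α) ≤ ENNReal.ofReal (vGR f (2 ^ (N + 1))⁻¹) *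
      ((∫⁻ x in dyadicBox 0 0, ENNReal.ofReal (f x - α)) +
        ENNReal.ofReal α * (2 ^ (n + 1) * volume ({x | α < f x} ∩ dyadicBox 0 0))) := by
  set E : Set (Fin n → ℝ) := {x | α < f x} ∩ dyadicBox 0 0
  set U := stoppingSet E (2 ^ (n + 1)) N
  have hU : U ⊆ dyadicBox 0 0 := iUnion₂_subset fun p hp ↦
    dyadicBox_subset_of_mem_stoppingBoxes inter_subset_right hp p.1.zero_le
  calc ∫⁻ x in dyadicBox 0 0, ENNReal.ofReal (f x - α)
      ≤ ∫⁻ x in U, ENNReal.ofReal (f x - α) :=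
        lintegral_ofReal_sub_le_lintegral_stoppingSet f α (measurableSet_dyadicBox 0 0)
          (one_lt_pow₀ (by norm_num) n.succ_ne_zero) N
    _ ≤ ENNReal.ofReal (vGR f (2 ^ (N + 1))⁻¹) * ∫⁻ x in U, ENNReal.ofReal (f x) :=
        lintegral_stoppingSet_ofReal_sub_le hf h0 hα
    _ ≤ ENNReal.ofReal (vGR f (2 ^ (N + 1))⁻¹) *
          ∫⁻ x in U, (ENNReal.ofReal (f x - α) + ENNReal.ofReal α) := by
        gcongr with x
        simpa using ENNReal.ofReal_add_le (p := f x - α) (q := α)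
    _ ≤ _ := by
        rw [lintegral_add_right _ measurable_const, setLIntegral_const]
        gcongr
        exact volume_stoppingSet_le E _ N

lemma lintegral_Q0_ofReal_sub_le
    (hα : 2 ^ (n + 1) * volume {x ∈ Q0 n | α < f x} ≤ ((2 ^ N) ^ n)⁻¹) :
    ∫⁻ x in Q0 n, ENNReal.ofReal (f x - α) ≤ ENNReal.ofReal (vGR f (2 ^ (N + 1))⁻¹) *
      ((∫⁻ x in Q0 n, ENNReal.ofReal (f x - α)) +
        ENNReal.ofReal α * (2 ^ (n + 1) * volume {x ∈ Q0 n | α < f x})) := by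
  have volume_eq : volume {x ∈ Q0 n | α < f x} = volume ({x | α < f x} ∩ dyadicBox 0 0) := by
    rw [ofPred_and, inter_comm]
    exact measure_congr ((EventuallyEq.refl _ _).inter (dyadicBox_zero_ae_eq_Q0 n).symm)
  rw [volume_eq] at hα ⊢
  rw [← Measure.restrict_congr_set (dyadicBox_zero_ae_eq_Q0 n)]
  exact lintegral_unitBox_ofReal_sub_le hf h0 hα

end LevelSetEstimate

section HardyAverage

variable {g : ℝ → ℝ} {r s t T : ℝ}

lemma mul_hardyAvg (g : ℝ → ℝ) (ht : t ≠ 0) : t * hardyAvg g t = ∫ u in Ioc 0 t, g u := by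
  rw [hardyAvg, mul_inv_cancel_left₀ ht]

lemma setIntegral_Ioc_sub_const (hg : IntegrableOn g (Ioc 0 T)) (ht : t ∈ Ioc 0 T) (a : ℝ) :
    ∫ u in Ioc 0 t, (g u - a) = t * (hardyAvg g t - a) := by
  rw [integral_sub (hg.mono_set (Ioc_subset_Ioc_right ht.2)) (integrable_const a),
    setIntegral_const, mul_sub, mul_hardyAvg g ht.1.ne']
  simp [ht.1.le]

lemma mul_hardyAvg_sub_le_setIntegral_max (hg : IntegrableOn g (Ioc 0 T)) (ht : t ∈ Ioc 0 T)
    (a : ℝ) : t * (hardyAvg g t - a) ≤ ∫ u in Ioc 0 T, max (g u - a) 0 := by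
  have hmax : IntegrableOn (fun u ↦ max (g u - a) 0) (Ioc 0 T) :=
    (hg.sub (integrable_const a)).pos_part
  have hsub : Ioc 0 t ⊆ Ioc 0 T := Ioc_subset_Ioc_right ht.2
  rw [← setIntegral_Ioc_sub_const hg ht]
  calc ∫ u in Ioc 0 t, (g u - a)
      ≤ ∫ u in Ioc 0 t, max (g u - a) 0 :=
        integral_mono ((hg.mono_set hsub).sub (integrable_const a)) (hmax.mono_set hsub)
          fun u ↦ le_max_left _ _
    _ ≤ ∫ u in Ioc 0 T, max (g u - a) 0 :=
        setIntegral_mono_set hmax (.of_forall fun u ↦ le_max_right _ _) hsub.eventuallyLE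

variable (hmono : AntitoneOn g (Ioc 0 T)) (hg : IntegrableOn g (Ioc 0 T))
include hmono hg

lemma setIntegral_max_sub_eq_mul_hardyAvg_sub (ht : t ∈ Ioc 0 T) :
    ∫ u in Ioc 0 T, max (g u - g t) 0 = t * (hardyAvg g t - g t) := by
  rw [← setIntegral_Ioc_sub_const hg ht]
  have hsub : Ioc 0 t ⊆ Ioc 0 T := Ioc_subset_Ioc_right ht.2
  calc ∫ u in Ioc 0 T, max (g u - g t) 0
      = ∫ u in Ioc 0 t, max (g u - g t) 0 :=
        setIntegral_eq_of_subset_of_forall_sdiff_eq_zero measurableSet_Ioc hsub fun u hu ↦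
          max_eq_right <| sub_nonpos.2 <|
            hmono ht hu.1 (le_of_not_ge fun hut ↦ hu.2 ⟨hu.1.1, hut⟩)
    _ = ∫ u in Ioc 0 t, (g u - g t) := by
        refine setIntegral_congr_fun measurableSet_Ioc fun u hu ↦ max_eq_left (sub_nonneg.2 ?_)
        exact hmono (hsub hu) ht hu.2

lemma le_hardyAvg (ht : t ∈ Ioc 0 T) : g t ≤ hardyAvg g t := by
  have hnonneg : 0 ≤ t * (hardyAvg g t - g t) := by
    rw [← setIntegral_max_sub_eq_mul_hardyAvg_sub hmono hg ht]
    exact integral_nonneg fun u ↦ le_max_right _ _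
  exact sub_nonneg.1 (nonneg_of_mul_nonneg_right hnonneg ht.1)

lemma mul_hardyAvg_sub_le_mul_hardyAvg_sub (hr : r ∈ Ioc 0 T) (ht : t ∈ Ioc 0 T) :
    r * (hardyAvg g r - g t) ≤ t * (hardyAvg g t - g t) :=
  (mul_hardyAvg_sub_le_setIntegral_max hg hr (g t)).trans_eq
    (setIntegral_max_sub_eq_mul_hardyAvg_sub hmono hg ht)

lemma antitoneOn_hardyAvg : AntitoneOn (hardyAvg g) (Ioc 0 T) := by
  intro t ht r hr htr
  have h := mul_hardyAvg_sub_le_mul_hardyAvg_sub hmono hg hr ht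
  have hle := sub_nonneg.2 (le_hardyAvg hmono hg ht)
  have : r * (hardyAvg g r - g t) ≤ r * (hardyAvg g t - g t) := h.trans (by gcongr)
  linarith [le_of_mul_le_mul_left this hr.1]

lemma hardyAvg_le_add_div_mul (hs : s ∈ Ioc 0 T) (ht : t ∈ Ioc 0 T) :
    hardyAvg g s ≤ g t + t / s * (hardyAvg g t - g t) := by
  have h := mul_hardyAvg_sub_le_mul_hardyAvg_sub hmono hg hs ht
  rw [← sub_le_iff_le_add', div_mul_eq_mul_div, le_div_iff₀ hs.1, mul_comm]
  exact h

end HardyAverage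

namespace IsRearrangement

variable {n : ℕ} {f f' : (Fin n → ℝ) → ℝ} {g : ℝ → ℝ} {t : ℝ}

lemma congr_on_Q0 (hfg : IsRearrangement f g) (h : EqOn f f' (Q0 n)) : IsRearrangement f' g := by
  refine ⟨hfg.1, hfg.2.1, fun a ↦ (hfg.2.2 a).trans (congr_arg volume (Set.ext fun x ↦ ?_))⟩
  exact and_congr_right fun hx ↦ by rw [h hx]

lemma volume_lt_le (hfg : IsRearrangement f g) (ht : t ∈ Ioc 0 1) :
    volume {x ∈ Q0 n | g t < f x} ≤ ENNReal.ofReal t := by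
  calc volume {x ∈ Q0 n | g t < f x}
      = volume {u ∈ Ioc 0 1 | g t < g u} := (hfg.2.2 _).symm
    _ ≤ volume (Ioc 0 t) := measure_mono fun u ⟨hu, hlt⟩ ↦
        ⟨hu.1, le_of_not_gt fun htu ↦ (hfg.1 ht hu htu.le).not_gt hlt⟩
    _ = ENNReal.ofReal t := by rw [Real.volume_Ioc, sub_zero]

lemma nonneg (hfg : IsRearrangement f g) (h0 : ∀ x ∈ Q0 n, 0 ≤ f x) (ht : t ∈ Ioo 0 1) :
    0 ≤ g t := by
  by_contra! hneg
  have level_eq : {x ∈ Q0 n | g t < f x} = Q0 n := sep_eq_self_iff_mem_true.2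
    fun x hx ↦ hneg.trans_le (h0 x hx)
  have hle := hfg.volume_lt_le (Ioo_subset_Ioc_self ht)
  rw [level_eq, volume_Q0, ENNReal.one_le_ofReal] at hle
  exact hle.not_gt ht.2

lemma identDistrib (hfg : IsRearrangement f g) (hf : AEMeasurable f (volume.restrict (Q0 n))) :
    IdentDistrib g f (volume.restrict (Ioc 0 1)) (volume.restrict (Q0 n)) := by
  refine identDistrib_of_measure_lt_eq
    (aemeasurable_restrict_of_antitoneOn measurableSet_Ioc hfg.1) hf fun a ↦ ?_
  rw [Measure.restrict_apply' measurableSet_Ioc, Measure.restrict_apply' (measurableSet_Q0 n),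
    inter_comm, inter_comm _ (Q0 n)]
  exact hfg.2.2 a

variable (hfg : IsRearrangement f g) (hf : IntegrableOn f (Q0 n))
include hfg hf

lemma integrableOn : IntegrableOn g (Ioc 0 1) :=
  (hfg.identDistrib hf.aestronglyMeasurable.aemeasurable).integrable_iff.2 hf

lemma hardyAvg_one : hardyAvg g 1 = avgOn f (Q0 n) := by
  rw [hardyAvg, avgOn, (hfg.identDistrib hf.aestronglyMeasurable.aemeasurable).integral_eq,
    volume_Q0, ENNReal.toReal_one]

lemma lintegral_Q0_ofReal_sub (ht : t ∈ Ioc 0 1) :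
    ∫⁻ x in Q0 n, ENNReal.ofReal (f x - g t) = ENNReal.ofReal (t * (hardyAvg g t - g t)) := by
  have hdist := (hfg.identDistrib hf.aestronglyMeasurable.aemeasurable).comp
    (u := fun y ↦ ENNReal.ofReal (y - g t)) (by fun_prop)
  have hg := hfg.integrableOn hf
  have hmax : IntegrableOn (fun u ↦ max (g u - g t) 0) (Ioc 0 1) :=
    (hg.sub (integrable_const _)).pos_part
  rw [← setIntegral_max_sub_eq_mul_hardyAvg_sub hfg.1 hg ht,
    ofReal_integral_eq_lintegral_ofReal hmax (.of_forall fun u ↦ le_max_right _ _)]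
  simpa [Function.comp_def] using hdist.lintegral_eq.symm

variable (h0 : ∀ x ∈ Q0 n, 0 ≤ f x)
include h0

lemma mul_hardyAvg_le_avgOn {s : ℝ} (hs : s ∈ Ioc 0 1) : s * hardyAvg g s ≤ avgOn f (Q0 n) := by
  have g_nonneg : 0 ≤ᵐ[volume.restrict (Ioc 0 1)] g := by
    rw [← Measure.restrict_congr_set Ioo_ae_eq_Ioc]
    exact ae_restrict_of_forall_mem measurableSet_Ioo fun u hu ↦ hfg.nonneg h0 hu
  rw [← hfg.hardyAvg_one hf, ← one_mul (hardyAvg g 1), mul_hardyAvg g hs.1.ne',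
    mul_hardyAvg g one_ne_zero]
  exact setIntegral_mono_set (hfg.integrableOn hf) g_nonneg
    (Ioc_subset_Ioc_right hs.2).eventuallyLE

lemma mul_hardyAvg_sub_le_vGR_mul {N : ℕ} (ht : t ∈ Ioo 0 1)
    (htN : 2 ^ (n + 1) * t ≤ ((2 ^ N) ^ n)⁻¹) :
    t * (hardyAvg g t - g t) ≤ vGR f (2 ^ (N + 1))⁻¹ *
      (t * (hardyAvg g t - g t) + g t * (2 ^ (n + 1) * t)) := by
  have ht1 := Ioo_subset_Ioc_self ht
  have hgt := hfg.nonneg h0 ht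
  have hge := sub_nonneg.2 (le_hardyAvg hfg.1 (hfg.integrableOn hf) ht1)
  have hpos : 0 ≤ 2 ^ (n + 1) * t := mul_nonneg (by positivity) ht.1.le
  have level_le : 2 ^ (n + 1) * volume {x ∈ Q0 n | g t < f x} ≤
      ENNReal.ofReal (2 ^ (n + 1) * t) := by
    rw [ENNReal.ofReal_mul (by positivity), ENNReal.ofReal_pow zero_le_two, ENNReal.ofReal_ofNat]
    exact mul_le_mul_right (hfg.volume_lt_le ht1) _
  have ofReal_inv : ENNReal.ofReal ((2 ^ N) ^ n)⁻¹ = ((2 ^ N) ^ n)⁻¹ := by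
    rw [ENNReal.ofReal_inv_of_pos (by positivity)]
    simp [ENNReal.ofReal_pow]
  have key := lintegral_Q0_ofReal_sub_le hf h0
    ((level_le.trans (ENNReal.ofReal_le_ofReal htN)).trans_eq ofReal_inv)
  rw [hfg.lintegral_Q0_ofReal_sub hf ht1] at key
  have hsum := add_nonneg (mul_nonneg ht.1.le hge) (mul_nonneg hgt hpos)
  rw [← ENNReal.ofReal_le_ofReal_iff (mul_nonneg (vGR_nonneg f _) hsum),
    ENNReal.ofReal_mul (vGR_nonneg f _),
    ENNReal.ofReal_add (mul_nonneg ht.1.le hge) (mul_nonneg hgt hpos), ENNReal.ofReal_mul hgt]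
  exact key.trans (by gcongr)

lemma hardyAvg_sub_le_vGR_mul {N : ℕ} (ht : t ∈ Ioo 0 1)
    (htN : 2 ^ (n + 1) * t ≤ ((2 ^ N) ^ n)⁻¹) :
    hardyAvg g t - g t ≤ 2 ^ (n + 1) * vGR f (2 ^ (N + 1))⁻¹ * hardyAvg g t := by
  have hge := le_hardyAvg hfg.1 (hfg.integrableOn hf) (Ioo_subset_Ioc_self ht)
  refine le_of_mul_le_mul_left ?_ ht.1
  calc t * (hardyAvg g t - g t)
      ≤ vGR f (2 ^ (N + 1))⁻¹ * (t * (hardyAvg g t - g t) + g t * (2 ^ (n + 1) * t)) :=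
        hfg.mul_hardyAvg_sub_le_vGR_mul hf h0 ht htN
    _ ≤ vGR f (2 ^ (N + 1))⁻¹ * (t * (2 ^ (n + 1) * (hardyAvg g t - g t)) +
          g t * (2 ^ (n + 1) * t)) := by
        have := vGR_nonneg f (2 ^ (N + 1))⁻¹
        have := ht.1
        gcongr
        exact le_mul_of_one_le_left (sub_nonneg.2 hge) (one_le_pow₀ one_le_two)
    _ = t * (2 ^ (n + 1) * vGR f (2 ^ (N + 1))⁻¹ * hardyAvg g t) := by ring

lemma hardyAvg_dyadic_succ_le (hn : 1 ≤ n) (k : ℕ) :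
    hardyAvg g ((2 ^ (k + 3)) ^ n)⁻¹ ≤
      (1 + 2 ^ (2 * n + 1) * vGR f (2 ^ (k + 1))⁻¹) * hardyAvg g ((2 ^ (k + 2)) ^ n)⁻¹ := by
  have mem_Ioo (j : ℕ) : (((2 : ℝ) ^ (j + 1)) ^ n)⁻¹ ∈ Ioo 0 1 :=
    ⟨by positivity, inv_lt_one_of_one_lt₀
      (one_lt_pow₀ (one_lt_pow₀ one_lt_two j.succ_ne_zero) (by lia))⟩
  set s : ℝ := ((2 ^ (k + 3)) ^ n)⁻¹
  set t : ℝ := ((2 ^ (k + 2)) ^ n)⁻¹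
  have ratio : t / s = 2 ^ n := by
    simp only [s, t, pow_succ _ (k + 2), mul_pow _ _ n]
    field_simp
  have level_le : 2 ^ (n + 1) * t ≤ ((2 ^ k) ^ n)⁻¹ := by
    rw [show (2 : ℝ) ^ (n + 1) * t = 2 / 2 ^ n * ((2 ^ k) ^ n)⁻¹ by
      simp only [t, pow_succ, mul_pow _ _ n]
      field_simp]
    refine mul_le_of_le_one_left (by positivity) ((div_le_one (by positivity)).2 ?_)
    exact le_self_pow₀ one_le_two (by lia)
  have hgap := hfg.hardyAvg_sub_le_vGR_mul hf h0 (mem_Ioo (k + 1)) level_le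
  have hge := le_hardyAvg hfg.1 (hfg.integrableOn hf) (Ioo_subset_Ioc_self (mem_Ioo (k + 1)))
  calc hardyAvg g s
      ≤ g t + 2 ^ n * (hardyAvg g t - g t) := ratio ▸ hardyAvg_le_add_div_mul hfg.1
        (hfg.integrableOn hf) (Ioo_subset_Ioc_self (mem_Ioo (k + 2)))
        (Ioo_subset_Ioc_self (mem_Ioo (k + 1)))
    _ ≤ hardyAvg g t + 2 ^ n * (2 ^ (n + 1) * vGR f (2 ^ (k + 1))⁻¹ * hardyAvg g t) := by gcongr
    _ = (1 + 2 ^ (2 * n + 1) * vGR f (2 ^ (k + 1))⁻¹) * hardyAvg g t := by ring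

lemma hardyAvg_dyadic_le_exp_sum (hn : 1 ≤ n) (K : ℕ) :
    hardyAvg g ((2 ^ (K + 2)) ^ n)⁻¹ ≤ 4 ^ n * avgOn f (Q0 n) *
      exp (2 ^ (2 * n + 1) * ∑ k ∈ Finset.range K, vGR f (2 ^ (k + 1))⁻¹) := by
  induction K with
  | zero =>
    have h := hfg.mul_hardyAvg_le_avgOn hf h0 (s := ((2 ^ 2) ^ n)⁻¹)
      ⟨by positivity, inv_le_one_of_one_le₀ (one_le_pow₀ (by norm_num))⟩
    rw [inv_mul_le_iff₀ (by positivity)] at h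
    norm_num at h ⊢
    exact h
  | succ K ih =>
    have hv := vGR_nonneg f (2 ^ (K + 1))⁻¹
    calc hardyAvg g ((2 ^ (K + 3)) ^ n)⁻¹
        ≤ (1 + 2 ^ (2 * n + 1) * vGR f (2 ^ (K + 1))⁻¹) * hardyAvg g ((2 ^ (K + 2)) ^ n)⁻¹ :=
          hfg.hardyAvg_dyadic_succ_le hf h0 hn K
      _ ≤ exp (2 ^ (2 * n + 1) * vGR f (2 ^ (K + 1))⁻¹) * (4 ^ n * avgOn f (Q0 n) *
            exp (2 ^ (2 * n + 1) * ∑ k ∈ Finset.range K, vGR f (2 ^ (k + 1))⁻¹)) := by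
          have havg := avgOn_nonneg (measurableSet_Q0 n) h0
          refine mul_le_mul_of_nonneg ?_ ih (by positivity) (by positivity)
          rw [add_comm]
          exact add_one_le_exp _
      _ = _ := by
          rw [Finset.sum_range_succ, mul_add, exp_add]
          ring

end IsRearrangement

section DyadicSum

variable {v : ℝ → ℝ} (hv : Monotone v)
include hv

lemma intervalIntegrable_div_id_of_monotone {a b : ℝ} (ha : 0 < a) (hb : 0 < b) :
    IntervalIntegrable (fun σ ↦ v σ / σ) volume a b := by
  simp only [div_eq_mul_inv]
  refine hv.intervalIntegrable.mul_continuousOn (continuousOn_inv₀.mono fun σ hσ ↦ ?_)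
  exact ((lt_min ha hb).trans_le hσ.1).ne'

lemma log_two_mul_le_integral_div_id {a : ℝ} (ha : 0 < a) :
    log 2 * v a ≤ ∫ σ in a..2 * a, v σ / σ := by
  have hle : a ≤ 2 * a := by linarith
  calc log 2 * v a = ∫ σ in a..2 * a, v a / σ := by
        simp only [div_eq_mul_inv]
        rw [intervalIntegral.integral_const_mul, integral_inv_of_pos ha (by positivity),
          mul_div_cancel_right₀ _ ha.ne', mul_comm]
    _ ≤ ∫ σ in a..2 * a, v σ / σ := by
        refine intervalIntegral.integral_mono_on hle
          (intervalIntegrable_div_id_of_monotone monotone_const ha (by positivity))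
          (intervalIntegrable_div_id_of_monotone hv ha (by positivity)) fun σ hσ ↦ ?_
        exact div_le_div_of_nonneg_right (hv hσ.1) (ha.le.trans hσ.1)

lemma log_two_mul_sum_le_integral_div_id (K : ℕ) :
    log 2 * ∑ k ∈ Finset.range K, v (2 ^ (k + 1))⁻¹ ≤ ∫ σ in (2 ^ K)⁻¹..1, v σ / σ := by
  induction K with
  | zero => simp
  | succ K ih =>
    have double : 2 * ((2 : ℝ) ^ (K + 1))⁻¹ = (2 ^ K)⁻¹ := by rw [pow_succ]; field_simp
    have block := log_two_mul_le_integral_div_id hv (a := (2 ^ (K + 1))⁻¹) (by positivity)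
    rw [double] at block
    rw [Finset.sum_range_succ, mul_add, add_comm,
      ← intervalIntegral.integral_add_adjacent_intervals
      (intervalIntegrable_div_id_of_monotone hv (b := (2 ^ K)⁻¹) (by positivity) (by positivity))
      (intervalIntegrable_div_id_of_monotone hv (by positivity) one_pos)]
    exact add_le_add block ih

lemma log_two_mul_sum_le_integral_div_id_of_le (hv0 : ∀ σ, 0 ≤ v σ) {s : ℝ} (hs : 0 < s) {K : ℕ}
    (hsK : s ≤ (2 ^ K)⁻¹) :
    log 2 * ∑ k ∈ Finset.range K, v (2 ^ (k + 1))⁻¹ ≤ ∫ σ in s..1, v σ / σ := by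
  have hK : ((2 : ℝ) ^ K)⁻¹ ≤ 1 := inv_le_one_of_one_le₀ (one_le_pow₀ one_le_two)
  refine (log_two_mul_sum_le_integral_div_id hv K).trans ?_
  refine intervalIntegral.integral_mono_interval hsK hK le_rfl ?_
    (intervalIntegrable_div_id_of_monotone hv hs one_pos)
  exact ae_restrict_of_forall_mem measurableSet_Ioc fun σ hσ ↦
    div_nonneg (hv0 σ) (hs.trans hσ.1).le

end DyadicSum

lemma IsRearrangement.hardyAvg_le_mul_exp_integral {n : ℕ} {f : (Fin n → ℝ) → ℝ} {g : ℝ → ℝ}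
    (hfg : IsRearrangement f g) (hf : IntegrableOn f (Q0 n)) (h0 : ∀ x ∈ Q0 n, 0 ≤ f x)
    (hn : 1 ≤ n) {t : ℝ} (ht : t ∈ Ioc 0 1) :
    hardyAvg g t ≤ 4 ^ n * avgOn f (Q0 n) *
      exp (2 ^ (2 * n + 1) / log 2 * ∫ σ in t ^ (n : ℝ)⁻¹..1, vGR f σ / σ) := by
  set s := t ^ (n : ℝ)⁻¹
  have hs : 0 < s := rpow_pos_of_pos ht.1 _
  have s_pow : s ^ n = t := rpow_inv_natCast_pow ht.1.le (by lia)
  obtain ⟨K, hKs, hsK⟩ := exists_nat_pow_near_of_lt_one hs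
    (rpow_le_one ht.1.le ht.2 (by positivity)) (inv_pos.2 two_pos)
    (inv_lt_one_of_one_lt₀ one_lt_two)
  rw [inv_pow] at hKs hsK
  have grid_le : (((2 : ℝ) ^ (K + 2)) ^ n)⁻¹ ≤ t := by
    rw [← s_pow, ← inv_pow]
    gcongr
    refine le_trans ?_ hKs.le
    gcongr <;> norm_num
  have sum_le := log_two_mul_sum_le_integral_div_id_of_le (monotone_vGR hf h0) (vGR_nonneg f) hs hsK
  have havg := avgOn_nonneg (measurableSet_Q0 n) h0
  calc hardyAvg g t
      ≤ hardyAvg g ((2 ^ (K + 2)) ^ n)⁻¹ :=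
        antitoneOn_hardyAvg hfg.1 (hfg.integrableOn hf) ⟨by positivity, grid_le.trans ht.2⟩ ht
          grid_le
    _ ≤ 4 ^ n * avgOn f (Q0 n) *
          exp (2 ^ (2 * n + 1) * ∑ k ∈ Finset.range K, vGR f (2 ^ (k + 1))⁻¹) :=
        hfg.hardyAvg_dyadic_le_exp_sum hf h0 hn K
    _ ≤ _ := by
        rw [← le_div_iff₀' (log_pos one_lt_two)] at sum_le
        rw [div_mul_eq_mul_div, ← mul_div_assoc']
        gcongr

/-- **Theorem 4.** There are constants `c₁, c₂, c₃, c₄ > 0` depending only on `n`, with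
`c₄ > 1`, such that for every integrable `f : [0,1]ⁿ → [0,∞)` and `t ∈ (0, 1/c₄]`,
`f**(t) ≤ c₁ f_{Q₀} exp(c₂ ∫_{c₃ t^{1/n}}^1 v(f;σ) dσ/σ)`. -/
theorem hardy_exponential_bound (n : ℕ) (hn : 1 ≤ n) :
    ∃ c1 c2 c3 c4 : ℝ, 0 < c1 ∧ 0 < c2 ∧ 0 < c3 ∧ 1 < c4 ∧
      ∀ (f : (Fin n → ℝ) → ℝ), IntegrableOn f (Q0 n) → (∀ x ∈ Q0 n, 0 ≤ f x) →
        ∀ (fstar : ℝ → ℝ), IsRearrangement (fun x => |f x|) fstar →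
          ∀ t ∈ Set.Ioc (0:ℝ) (1 / c4),
            hardyAvg fstar t ≤ c1 * avgOn f (Q0 n) *
              Real.exp (c2 * ∫ σ in (c3 * t ^ ((n : ℝ))⁻¹)..(1:ℝ), vGR f σ / σ) := by
  refine ⟨4 ^ n, 2 ^ (2 * n + 1) / log 2, 1, 2, by positivity,
    div_pos (by positivity) (log_pos one_lt_two), one_pos, one_lt_two, ?_⟩
  intro f hf h0 fstar hstar t ht
  have hrearr : IsRearrangement f fstar := hstar.congr_on_Q0 fun x hx ↦ abs_of_nonneg (h0 x hx)
  rw [one_mul]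
  exact hrearr.hardyAvg_le_mul_exp_integral hf h0 hn ⟨ht.1, ht.2.trans (by norm_num)⟩
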